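/- arXiv:math/0004121 — 3 statements merged into one kernel-verified Lean document; each statement's English description precedes it below -/
import Mathlib

section
/- (Theorem 2.1) In the general hypothesis testing setup, for every r > 0 one has B_e(r) = inf{ R + η(R) : R ∈ ℝ, η(R) < r }, where the infimum of the empty set is +∞. -/
open MeasureTheory Filter
open scoped ENNReal NNReal

/-- The exponent `-(1/n) log p` of a nonneg extended real `p`, valued in `EReal`,
with the conventions `-log 0 = +∞` and `-log ∞ = -∞`. -/
noncomputable def expRate (n : ℕ) (p : ℝ≥0∞) : EReal :=
  (((n : ℝ)⁻¹ : ℝ) : EReal) * (-(ENNReal.log p))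

/-- The likelihood ratio `dμ/dν`, defined to be `+∞` on the part of the space where
`μ` is singular with respect to `ν` (μ-a.e.). -/
noncomputable def lratio {Ω : Type*} [MeasurableSpace Ω] (μ ν : Measure Ω) (x : Ω) : ℝ≥0∞ :=
  μ.rnDeriv (μ + ν) x / ν.rnDeriv (μ + ν) x

section Setup

variable {Ω : ℕ → Type*} [∀ n, MeasurableSpace (Ω n)]

/-- `η(R) = liminf_n -(1/n) log P_n{ (1/n) log dP_n/dQ_n ≤ R }`. -/
noncomputable def eta (P Q : ∀ n, Measure (Ω n)) (R : ℝ) : EReal :=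
  Filter.atTop.liminf fun n =>
    expRate n ((P n) {x | lratio (P n) (Q n) x ≤ ENNReal.ofReal (Real.exp (n * R))})

/-- `E` is `r`-achievable: there are measurable acceptance regions `A n` with
`liminf -(1/n) log μ_n ≥ r` and `liminf -(1/n) log λ_n ≥ E`. -/
def rAchievable (P Q : ∀ n, Measure (Ω n)) (r E : ℝ) : Prop :=
  ∃ A : ∀ n, Set (Ω n), (∀ n, MeasurableSet (A n)) ∧
    (r : EReal) ≤ Filter.atTop.liminf (fun n => expRate n ((P n) (A n)ᶜ)) ∧
    (E : EReal) ≤ Filter.atTop.liminf (fun n => expRate n ((Q n) (A n)))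

/-- The optimal error exponent `B_e(r)`: the supremum of all `r`-achievable `E`. -/
noncomputable def Be (P Q : ∀ n, Measure (Ω n)) (r : ℝ) : EReal :=
  sSup {x : EReal | ∃ E : ℝ, rAchievable P Q r E ∧ x = (E : EReal)}

end Setup

lemma lratio_meas {Ω : Type*} [MeasurableSpace Ω] (μ ν : Measure Ω) :
    Measurable (lratio μ ν) :=
  (Measure.measurable_rnDeriv _ _).div (Measure.measurable_rnDeriv _ _)

lemma meas_eq_lint {Ω : Type*} [MeasurableSpace Ω] (μ ρ : Measure Ω)
    [IsFiniteMeasure μ] [IsFiniteMeasure ρ] (h : μ ≤ ρ) (S : Set Ω) :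
    ∫⁻ x in S, μ.rnDeriv ρ x ∂ρ = μ S :=
  Measure.setLIntegral_rnDeriv (Measure.absolutelyContinuous_of_le h) S

lemma lower_bound {Ω : Type*} [MeasurableSpace Ω] (μ ν : Measure Ω)
    [IsFiniteMeasure μ] [IsFiniteMeasure ν] (c : ℝ≥0∞) (hc0 : c ≠ 0) (hc : c ≠ ∞)
    (S : Set Ω) (hS : MeasurableSet S) (h : ∀ x ∈ S, lratio μ ν x ≤ c) :
    μ S ≤ c * ν S := by
  rw [← meas_eq_lint μ (μ + ν) (Measure.le_add_right le_rfl) S,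
    ← meas_eq_lint ν (μ + ν) (Measure.le_add_left le_rfl) S,
    ← lintegral_const_mul c (Measure.measurable_rnDeriv _ _)]
  refine setLIntegral_mono' hS fun x hx => ?_
  have h1 := h x hx
  unfold lratio at h1
  refine (ENNReal.div_le_iff_le_mul (Or.inr hc) (Or.inr hc0)).1 h1

lemma upper_bound {Ω : Type*} [MeasurableSpace Ω] (μ ν : Measure Ω)
    [IsFiniteMeasure μ] [IsFiniteMeasure ν] (c : ℝ≥0∞)
    (S : Set Ω) (hS : MeasurableSet S) (h : ∀ x ∈ S, c ≤ lratio μ ν x) :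
    c * ν S ≤ μ S := by
  rw [← meas_eq_lint μ (μ + ν) (Measure.le_add_right le_rfl) S,
    ← meas_eq_lint ν (μ + ν) (Measure.le_add_left le_rfl) S,
    ← lintegral_const_mul c (Measure.measurable_rnDeriv _ _)]
  refine setLIntegral_mono' hS fun x hx => ?_
  exact ENNReal.mul_le_of_le_div (h x hx)

lemma ofReal_exp_log (x : ℝ) : ENNReal.log (ENNReal.ofReal (Real.exp x)) = (x : EReal) := by
  rw [ENNReal.log_ofReal_of_pos (Real.exp_pos x), Real.log_exp]

lemma le_expRate_iff {n : ℕ} (hn : 0 < n) (p : ℝ≥0∞) (t : ℝ) :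
    (t : EReal) ≤ expRate n p ↔ p ≤ ENNReal.ofReal (Real.exp (-(n * t))) := by
  have hn' : (0 : ℝ) < n := by exact_mod_cast hn
  have hi : (0 : ℝ) < (n : ℝ)⁻¹ := inv_pos.2 hn'
  rw [← ENNReal.log_le_log_iff, ofReal_exp_log]
  unfold expRate
  induction ENNReal.log p using EReal.rec with
  | bot => simp [EReal.coe_mul_top_of_pos hi]
  | top =>
    simp [EReal.coe_mul_bot_of_pos hi]
    exact_mod_cast EReal.coe_ne_bot ((n : ℝ) * t)
  | coe x =>
    norm_cast
    rw [inv_mul_eq_div, le_div_iff₀ hn']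
    constructor <;> intro h <;> linarith

lemma rate_iff (p : ℕ → ℝ≥0∞) (c : EReal) :
    c ≤ atTop.liminf (fun n => expRate n (p n)) ↔
      ∀ t : ℝ, (t : EReal) < c →
        ∀ᶠ n : ℕ in atTop, p n ≤ ENNReal.ofReal (Real.exp (-(n * t))) := by
  rw [Filter.le_liminf_iff]
  constructor
  · intro h t ht
    filter_upwards [h t ht, eventually_gt_atTop 0] with n hn h0
    exact (le_expRate_iff h0 _ _).1 hn.le
  · intro h y hy
    obtain ⟨t, h1, h2⟩ := EReal.lt_iff_exists_real_btwn.1 hy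
    filter_upwards [h t h2, eventually_gt_atTop 0] with n hn h0
    exact h1.trans_le ((le_expRate_iff h0 _ _).2 hn)

lemma rate_add (p a b : ℕ → ℝ≥0∞) (c : EReal) (h : ∀ n, p n ≤ a n + b n)
    (ha : c ≤ atTop.liminf (fun n => expRate n (a n)))
    (hb : c ≤ atTop.liminf (fun n => expRate n (b n))) :
    c ≤ atTop.liminf (fun n => expRate n (p n)) := by
  rw [rate_iff] at *
  intro t ht
  obtain ⟨s, h1, h2⟩ := EReal.lt_iff_exists_real_btwn.1 ht
  have h1' : t < s := by exact_mod_cast h1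
  have h3 : ∀ᶠ n : ℕ in atTop, Real.log 2 / (s - t) ≤ n :=
    tendsto_natCast_atTop_atTop.eventually_ge_atTop _
  filter_upwards [ha s h2, hb s h2, h3] with n hna hnb hn
  rw [div_le_iff₀ (by linarith)] at hn
  refine (h n).trans ((add_le_add hna hnb).trans ?_)
  rw [← ENNReal.ofReal_add (Real.exp_pos _).le (Real.exp_pos _).le]
  apply ENNReal.ofReal_le_ofReal
  calc _ = Real.exp (Real.log 2 + -(n * s)) := by
        rw [Real.exp_add, Real.exp_log (by norm_num)]; ring
    _ ≤ _ := Real.exp_le_exp.2 (by nlinarith)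

lemma rate_shift (p q : ℕ → ℝ≥0∞) (d : ℝ) (c : EReal)
    (h : ∀ n : ℕ, p n ≤ ENNReal.ofReal (Real.exp (-(n * d))) * q n)
    (hq : c ≤ atTop.liminf (fun n => expRate n (q n))) :
    (d : EReal) + c ≤ atTop.liminf (fun n => expRate n (p n)) := by
  rw [rate_iff] at *
  intro t ht
  have h1 : ((t - d : ℝ) : EReal) < c := by
    rw [EReal.coe_sub]
    exact EReal.sub_lt_of_lt_add' ht
  filter_upwards [hq _ h1] with n hn
  refine (h n).trans ((mul_le_mul_right hn _).trans ?_)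
  rw [← ENNReal.ofReal_mul (Real.exp_pos _).le, ← Real.exp_add]
  apply ENNReal.ofReal_le_ofReal
  exact Real.exp_le_exp.2 (by nlinarith)

lemma rate_mono (p q : ℕ → ℝ≥0∞) (h : ∀ n, p n ≤ q n) :
    atTop.liminf (fun n => expRate n (q n)) ≤ atTop.liminf (fun n => expRate n (p n)) := by
  have := rate_shift p q 0 _ (by simpa using h) le_rfl
  simpa using this

lemma rate_nonneg (q : ℕ → ℝ≥0∞) (h : ∀ n, q n ≤ 1) :
    0 ≤ atTop.liminf (fun n => expRate n (q n)) := by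
  rw [rate_iff]
  intro t ht
  have ht' : t < 0 := by exact_mod_cast ht
  refine Eventually.of_forall fun n => (h n).trans ?_
  rw [ENNReal.one_le_ofReal, Real.one_le_exp_iff]
  have : (0 : ℝ) ≤ n := n.cast_nonneg
  nlinarith

section Aux

variable {Ω : ℕ → Type*} [∀ n, MeasurableSpace (Ω n)]

/-- The set where the divergence density rate exceeds `R`. -/
def upSet (P Q : ∀ n, Measure (Ω n)) (R : ℝ) (n : ℕ) : Set (Ω n) :=
  {x | ENNReal.ofReal (Real.exp (n * R)) < lratio (P n) (Q n) x}

/-- The exponent of the `Q`-probability of `upSet`. -/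
noncomputable def gam (P Q : ∀ n, Measure (Ω n)) (R : ℝ) : EReal :=
  atTop.liminf fun n => expRate n (Q n (upSet P Q R n))

lemma upSet_meas (P Q : ∀ n, Measure (Ω n)) (R : ℝ) (n : ℕ) :
    MeasurableSet (upSet P Q R n) :=
  measurableSet_lt measurable_const (lratio_meas _ _)

lemma upSet_compl (P Q : ∀ n, Measure (Ω n)) (R : ℝ) (n : ℕ) :
    (upSet P Q R n)ᶜ = {x | lratio (P n) (Q n) x ≤ ENNReal.ofReal (Real.exp (n * R))} := by
  ext x; simp [upSet]

lemma lowSet_meas (P Q : ∀ n, Measure (Ω n)) (R : ℝ) (n : ℕ) :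
    MeasurableSet {x | lratio (P n) (Q n) x ≤ ENNReal.ofReal (Real.exp (n * R))} :=
  measurableSet_le (lratio_meas _ _) measurable_const

variable (P Q : ∀ n, Measure (Ω n)) [∀ n, IsProbabilityMeasure (P n)]
    [∀ n, IsProbabilityMeasure (Q n)]

lemma low_bd (R : ℝ) (n : ℕ) (S : Set (Ω n)) (hS : MeasurableSet S)
    (h : ∀ x ∈ S, lratio (P n) (Q n) x ≤ ENNReal.ofReal (Real.exp (n * R))) :
    P n S ≤ ENNReal.ofReal (Real.exp (-(n * (-R)))) * Q n S := by
  have := lower_bound (P n) (Q n) _ (by simpa using Real.exp_pos _) ENNReal.ofReal_ne_top S hS h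
  simpa using this

lemma up_bd (R : ℝ) (n : ℕ) (S : Set (Ω n)) (hS : MeasurableSet S)
    (h : S ⊆ upSet P Q R n) :
    Q n S ≤ ENNReal.ofReal (Real.exp (-(n * R))) * P n S := by
  have := upper_bound (P n) (Q n) _ S hS (fun x hx => (h hx).le)
  calc Q n S = ENNReal.ofReal (Real.exp (-(n * R))) *
        (ENNReal.ofReal (Real.exp (n * R)) * Q n S) := by
        rw [← mul_assoc, ← ENNReal.ofReal_mul (Real.exp_pos _).le, ← Real.exp_add]
        simp
    _ ≤ _ := mul_le_mul_right this _

lemma eta_ge (R : ℝ) : ((-R : ℝ) : EReal) ≤ eta P Q R := by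
  have := rate_shift (fun n => P n {x | lratio (P n) (Q n) x ≤ ENNReal.ofReal (Real.exp (n * R))})
    (fun n => Q n {x | lratio (P n) (Q n) x ≤ ENNReal.ofReal (Real.exp (n * R))}) (-R) 0
    (fun n => low_bd P Q R n _ (lowSet_meas P Q R n) (fun x hx => hx))
    (rate_nonneg _ fun n => prob_le_one)
  simpa [eta] using this

lemma eta_anti {R R' : ℝ} (h : R ≤ R') : eta P Q R' ≤ eta P Q R := by
  refine rate_mono _ _ fun n => measure_mono fun x hx => ?_
  refine le_trans (b := ENNReal.ofReal (Real.exp (n * R))) hx ?_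
  gcongr

lemma gam_ge (R : ℝ) : (R : EReal) ≤ gam P Q R := by
  have := rate_shift (fun n => Q n (upSet P Q R n)) (fun n => P n (upSet P Q R n)) R 0
    (fun n => up_bd P Q R n _ (upSet_meas P Q R n) subset_rfl)
    (rate_nonneg _ fun n => prob_le_one)
  simpa [gam] using this

lemma gam_step (R R' : ℝ) (c : EReal) (h1 : c ≤ R + eta P Q R') (h2 : c ≤ gam P Q R') :
    c ≤ gam P Q R := by
  refine rate_add _ (fun n => Q n (upSet P Q R n \ upSet P Q R' n)) _ c (fun n => ?_)
    (h1.trans ?_) h2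
  · refine (measure_mono ?_).trans (measure_union_le _ _)
    intro x hx
    by_cases h : x ∈ upSet P Q R' n
    · exact Or.inr h
    · exact Or.inl ⟨hx, h⟩
  · refine rate_shift _ _ R _ (fun n => ?_) le_rfl
    refine (up_bd P Q R n _ ((upSet_meas P Q R n).diff (upSet_meas P Q R' n))
      Set.diff_subset).trans ?_
    refine mul_le_mul_right (measure_mono ?_) _
    rw [← upSet_compl]
    exact fun x hx => hx.2

lemma conv_part (r E R : ℝ) (hE : rAchievable P Q r E) (hR : eta P Q R < r) :
    (E : EReal) ≤ R + eta P Q R := by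
  obtain ⟨A, hA, h1, h2⟩ := hE
  have key : ((min r (-R + E) : ℝ) : EReal) ≤ eta P Q R := by
    refine rate_add _ (fun n => P n (A n)ᶜ)
      (fun n => P n (A n ∩ {x | lratio (P n) (Q n) x ≤ ENNReal.ofReal (Real.exp (n * R))}))
      _ (fun n => ?_) (le_trans ?_ h1) ?_
    · refine (measure_mono ?_).trans (measure_union_le _ _)
      intro x hx
      by_cases h : x ∈ A n
      · exact Or.inr ⟨h, hx⟩
      · exact Or.inl h
    · exact_mod_cast min_le_left _ _
    · refine le_trans (b := ((-R : ℝ) : EReal) + E) (by exact_mod_cast min_le_right _ _) ?_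
      refine rate_shift _ (fun n => Q n (A n)) (-R) _ (fun n => ?_) h2
      refine (low_bd P Q R n _ ((hA n).inter (lowSet_meas P Q R n)) (fun x hx => hx.2)).trans ?_
      exact mul_le_mul_right (measure_mono Set.inter_subset_left) _
  have h3 : ((-R + E : ℝ) : EReal) ≤ eta P Q R := by
    rcases le_total r (-R + E) with h | h
    · rw [min_eq_left h] at key
      exact absurd hR (not_lt.2 key)
    · rwa [min_eq_right h] at key
  calc (E : EReal) = (R : EReal) + ((-R + E : ℝ) : EReal) := by
        rw [← EReal.coe_add]; congr 1; ring
    _ ≤ _ := add_le_add le_rfl h3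

lemma direct_gam (r E ε : ℝ) (hε : 0 < ε)
    (H : ∀ R : ℝ, eta P Q R < r → ((E + ε : ℝ) : EReal) ≤ R + eta P Q R) (m : ℕ) :
    ∀ R : ℝ, (∀ R', R < R' → eta P Q R' < r) → E ≤ R + m * ε → (E : EReal) ≤ gam P Q R := by
  induction m with
  | zero =>
    intro R _ h
    refine le_trans ?_ (gam_ge P Q R)
    exact_mod_cast (by simpa using h : E ≤ R)
  | succ m ih =>
    intro R hR h
    have hlt : R < R + ε := by linarith
    refine gam_step P Q R (R + ε) _ ?_ (ih (R + ε) (fun R' h' => hR R' (hlt.trans h')) ?_)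
    · have h1 := H _ (hR _ hlt)
      have h2 := add_le_add (le_refl ((-ε : ℝ) : EReal)) h1
      rw [← add_assoc, ← EReal.coe_add, ← EReal.coe_add] at h2
      convert h2 using 2
      · ring
      · congr 1; ring
    · push_cast at h
      linarith

lemma direct_ach (r E ε : ℝ) (hε : 0 < ε)
    (H : ∀ R : ℝ, eta P Q R < r → ((E + ε : ℝ) : EReal) ≤ R + eta P Q R) (m : ℕ) :
    ∀ R : ℝ, r ≤ eta P Q R → E ≤ R + m * ε → rAchievable P Q r E := by
  have ach : ∀ R : ℝ, r ≤ eta P Q R → (E : EReal) ≤ gam P Q R → rAchievable P Q r E := by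
    intro R h1 h2
    refine ⟨upSet P Q R, upSet_meas P Q R, ?_, h2⟩
    simp only [upSet_compl]
    exact h1
  induction m with
  | zero =>
    intro R h1 h
    refine ach R h1 (le_trans ?_ (gam_ge P Q R))
    exact_mod_cast (by simpa using h : E ≤ R)
  | succ m ih =>
    intro R h1 h
    push_cast at h
    by_cases h2 : r ≤ eta P Q (R + ε)
    · exact ih _ h2 (by linarith)
    · push Not at h2
      refine ach R h1 (gam_step P Q R (R + ε) _ ?_ (direct_gam P Q r E ε hε H m (R + ε) 
        (fun R' h' => (eta_anti P Q h'.le).trans_lt h2) (by linarith)))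
      have h1 := H _ h2
      have h2 := add_le_add (le_refl ((-ε : ℝ) : EReal)) h1
      rw [← add_assoc, ← EReal.coe_add, ← EReal.coe_add] at h2
      convert h2 using 2
      · ring
      · congr 1; ring

end Aux

/-- Theorem 2.1: `B_e(r) = inf { R + η(R) : R ∈ ℝ, η(R) < r }` for every `r > 0`. -/
theorem han_theorem_2_1 {Ω : ℕ → Type*} [∀ n, MeasurableSpace (Ω n)]
    (P Q : ∀ n, Measure (Ω n)) [∀ n, IsProbabilityMeasure (P n)]
    [∀ n, IsProbabilityMeasure (Q n)] (r : ℝ) (hr : 0 < r) :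
    Be P Q r =
      sInf {x : EReal | ∃ R : ℝ, eta P Q R < (r : EReal) ∧ x = (R : EReal) + eta P Q R} := by
  apply le_antisymm
  · refine sSup_le ?_
    rintro _ ⟨E, hE, rfl⟩
    refine le_sInf ?_
    rintro _ ⟨R, hR, rfl⟩
    exact conv_part P Q r E R hE hR
  · refine le_of_forall_lt fun c hc => ?_
    obtain ⟨E, hcE, hE⟩ := EReal.lt_iff_exists_real_btwn.1 hc
    obtain ⟨E', hEE, hE'⟩ := EReal.lt_iff_exists_real_btwn.1 hE
    have hpos : 0 < E' - E := sub_pos.2 (by exact_mod_cast hEE)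
    refine hcE.trans_le (le_sSup ⟨E, ?_, rfl⟩)
    obtain ⟨m, hm⟩ := exists_nat_ge ((E + r) / (E' - E))
    rw [div_le_iff₀ hpos] at hm
    refine direct_ach P Q r E (E' - E) hpos (fun R hR => ?_) m (-r) ?_ (by linarith)
    · rw [add_sub_cancel]
      exact hE'.le.trans (sInf_le ⟨R, hR, rfl⟩)
    · simpa using eta_ge P Q (-r)
end

section
/- (Theorem 2.1, converse part) In the general hypothesis testing setup, for every r > 0, no real number E with E > inf{ R + η(R) : R ∈ ℝ, η(R) < r } is r-achievable; that is, for such E there exist no measurable acceptance regions A_n ⊆ Ω_n with liminf_{n→∞} −(1/n) log μ_n ≥ r and liminf_{n→∞} −(1/n) log λ_n ≥ E. -/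
open MeasureTheory Filter
open scoped ENNReal NNReal

lemma expRate_lt_iff {n : ℕ} (hn : 0 < n) (p : ℝ≥0∞) (x : ℝ) :
    expRate n p < (x : EReal) ↔ ENNReal.ofReal (Real.exp (-(n * x))) < p := by
  have hn' : (0 : ℝ) < n := by exact_mod_cast hn
  have hi : (0 : ℝ) < (n : ℝ)⁻¹ := inv_pos.2 hn'
  rw [← ENNReal.log_lt_log_iff, ENNReal.log_ofReal_of_pos (Real.exp_pos _), Real.log_exp]
  unfold expRate
  induction ENNReal.log p with
  | bot => simp [EReal.coe_mul_top_of_pos hi]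
  | top =>
    rw [EReal.neg_top, EReal.coe_mul_bot_of_pos hi]
    exact iff_of_true (EReal.bot_lt_coe _) (EReal.coe_lt_top _)
  | coe y =>
    rw [← EReal.coe_neg, ← EReal.coe_mul, EReal.coe_lt_coe_iff, EReal.coe_lt_coe_iff,
      inv_mul_lt_iff₀ hn']
    constructor <;> intro h <;> linarith

lemma le_of_lt_expRate {n : ℕ} (hn : 0 < n) (p : ℝ≥0∞) (x : ℝ)
    (h : (x : EReal) < expRate n p) : p ≤ ENNReal.ofReal (Real.exp (-(n * x))) := by
  by_contra hc
  exact lt_asymm h ((expRate_lt_iff hn p x).2 (not_le.1 hc))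

lemma measure_lratio_inter_le {Ω : Type*} [MeasurableSpace Ω] (μ ν : Measure Ω)
    [IsProbabilityMeasure μ] [IsProbabilityMeasure ν] (c : ℝ≥0∞) (hc : c ≠ ⊤) (hc0 : c ≠ 0)
    (A : Set Ω) (hA : MeasurableSet A) :
    μ ({x | lratio μ ν x ≤ c} ∩ A) ≤ c * ν A := by
  have hμ : μ ≪ μ + ν := Measure.absolutelyContinuous_of_le (Measure.le_add_right le_rfl)
  have hν : ν ≪ μ + ν := Measure.absolutelyContinuous_of_le (Measure.le_add_left le_rfl)
  have hm : Measurable (lratio μ ν) :=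
    (Measure.measurable_rnDeriv μ (μ + ν)).div (Measure.measurable_rnDeriv ν (μ + ν))
  have hS : MeasurableSet ({x | lratio μ ν x ≤ c} ∩ A) :=
    (measurableSet_le hm measurable_const).inter hA
  calc μ ({x | lratio μ ν x ≤ c} ∩ A)
      = ∫⁻ x in {x | lratio μ ν x ≤ c} ∩ A, μ.rnDeriv (μ + ν) x ∂(μ + ν) :=
        (Measure.setLIntegral_rnDeriv hμ _).symm
    _ ≤ ∫⁻ x in {x | lratio μ ν x ≤ c} ∩ A, c * ν.rnDeriv (μ + ν) x ∂(μ + ν) := by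
        refine setLIntegral_mono' hS fun x hx => ?_
        exact (ENNReal.div_le_iff_le_mul (Or.inr hc) (Or.inr hc0)).1 hx.1
    _ = c * ν ({x | lratio μ ν x ≤ c} ∩ A) := by
        rw [lintegral_const_mul _ (Measure.measurable_rnDeriv _ _),
          Measure.setLIntegral_rnDeriv hν]
    _ ≤ c * ν A := by gcongr; exact Set.inter_subset_right

/-- Theorem 2.1, converse part: for `r > 0`, no real
`E > inf { R + η(R) : R ∈ ℝ, η(R) < r }` is `r`-achievable. -/
theorem han_theorem_2_1_converse {Ω : ℕ → Type*} [∀ n, MeasurableSpace (Ω n)]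
    (P Q : ∀ n, Measure (Ω n)) [∀ n, IsProbabilityMeasure (P n)]
    [∀ n, IsProbabilityMeasure (Q n)] (r : ℝ) (hr : 0 < r) (E : ℝ)
    (hE : sInf {x : EReal | ∃ R : ℝ, eta P Q R < (r : EReal) ∧ x = (R : EReal) + eta P Q R}
      < (E : EReal)) :
    ¬ rAchievable P Q r E := by
  rintro ⟨A, hA, h1, h2⟩
  obtain ⟨_, ⟨R, hR, rfl⟩, hRE⟩ := sInf_lt_iff.1 hE
  have hlt : eta P Q R < ((min r (E - R) : ℝ) : EReal) := by
    revert hR hRE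
    induction eta P Q R with
    | bot => intro _ _; exact EReal.bot_lt_coe _
    | top => intro h; simp at h
    | coe y =>
      intro h h'
      rw [← EReal.coe_add] at h'
      rw [EReal.coe_lt_coe_iff] at *
      exact lt_min h (by linarith)
  obtain ⟨a, ha1, ha2⟩ := EReal.lt_iff_exists_real_btwn.1 hlt
  rw [EReal.coe_lt_coe_iff] at ha2
  obtain ⟨b, hab, hb⟩ := exists_between ha2
  have hbr : b < r := hb.trans_le (min_le_left _ _)
  have hbE : R + b < E := by
    have := hb.trans_le (min_le_right r (E - R)); linarith
  have f1 : ∀ᶠ n in atTop, (b : EReal) < expRate n ((P n) (A n)ᶜ) :=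
    eventually_lt_of_lt_liminf ((EReal.coe_lt_coe_iff.2 hbr).trans_le h1)
  have f2 : ∀ᶠ n in atTop, ((R + b : ℝ) : EReal) < expRate n ((Q n) (A n)) :=
    eventually_lt_of_lt_liminf ((EReal.coe_lt_coe_iff.2 hbE).trans_le h2)
  have f3 : ∃ᶠ n : ℕ in atTop, expRate n
      ((P n) {x | lratio (P n) (Q n) x ≤ ENNReal.ofReal (Real.exp (n * R))}) < (a : EReal) :=
    frequently_lt_of_liminf_lt (by isBoundedDefault) ha1
  have f4 : ∀ᶠ n : ℕ in atTop, Real.log 2 / (b - a) ≤ n :=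
    tendsto_natCast_atTop_atTop.eventually_ge_atTop _
  obtain ⟨n, hn3, hn1, hn2, hn4, hn0⟩ :=
    (f3.and_eventually (f1.and (f2.and (f4.and (eventually_gt_atTop 0))))).exists
  rw [expRate_lt_iff hn0] at hn3
  replace hn1 := le_of_lt_expRate hn0 _ _ hn1
  replace hn2 := le_of_lt_expRate hn0 _ _ hn2
  set c : ℝ≥0∞ := ENNReal.ofReal (Real.exp (n * R)) with hc
  have key : (P n) {x | lratio (P n) (Q n) x ≤ c} ≤
      ENNReal.ofReal (2 * Real.exp (-(n * b))) := by
    calc (P n) {x | lratio (P n) (Q n) x ≤ c}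
        ≤ (P n) ({x | lratio (P n) (Q n) x ≤ c} ∩ A n) + (P n) (A n)ᶜ := by
          refine (measure_mono ?_).trans (measure_union_le _ _)
          intro x hx
          by_cases h : x ∈ A n
          · exact Or.inl ⟨hx, h⟩
          · exact Or.inr h
      _ ≤ c * (Q n) (A n) + (P n) (A n)ᶜ := by
          gcongr
          exact measure_lratio_inter_le _ _ _ ENNReal.ofReal_ne_top
            (ENNReal.ofReal_pos.2 (Real.exp_pos _)).ne' _ (hA n)
      _ ≤ c * ENNReal.ofReal (Real.exp (-(n * (R + b))))
            + ENNReal.ofReal (Real.exp (-(n * b))) := by gcongr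
      _ = ENNReal.ofReal (2 * Real.exp (-(n * b))) := by
          rw [hc, ← ENNReal.ofReal_mul (Real.exp_pos _).le, ← Real.exp_add,
            ← ENNReal.ofReal_add (Real.exp_pos _).le (Real.exp_pos _).le]
          congr 1
          rw [two_mul]
          congr 2
          ring
  have h := (ENNReal.ofReal_lt_ofReal_iff (by positivity)).1 (hn3.trans_le key)
  rw [div_le_iff₀ (by linarith)] at hn4
  have h2' : (2 : ℝ) * Real.exp (-(n * b)) ≤ Real.exp (-(n * a)) := by
    calc (2 : ℝ) * Real.exp (-(n * b)) = Real.exp (Real.log 2 + -(n * b)) := by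
          rw [Real.exp_add, Real.exp_log two_pos]
      _ ≤ _ := Real.exp_le_exp.2 (by linarith)
  linarith
end

section
/- (Natarajan's theorem for Markov sources, eq. (3.7)) Let X be a finite set and let P(·|·) and P̄(·|·) be transition probability matrices on X with P(y|x) > 0 and P̄(y|x) > 0 for all x, y ∈ X, with unique stationary distributions p and p̄ respectively. Let the null hypothesis P_n and the alternative hypothesis Q_n be the laws on X^n of the stationary Markov chains with transition matrices P and P̄ and initial distributions p and p̄, respectively. Then for every r > 0, B_e(r) = inf{ D(Q‖P̄|q) : Q ∈ 𝒫_0, D(Q‖P|q) < r }, where 𝒫_0 is the set of probability distributions Q on X × X satisfying the stationarity condition Σ_{x₁} Q(x₁, x) = Σ_{x₂} Q(x, x₂) for all x ∈ X, q is the marginal q(x₁) = Σ_{x₂} Q(x₁, x₂), and the conditional divergences are D(Q‖P|q) = Σ_{x₁} q(x₁) D(Q(·|x₁)‖P(·|x₁)) and D(Q‖P̄|q) = Σ_{x₁} q(x₁) D(Q(·|x₁)‖P̄(·|x₁)) with Q(x₂|x₁) = Q(x₁,x₂)/q(x₁) and D the Kullback–Leibler divergence (natural logarithm). -/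
open MeasureTheory Filter
open scoped ENNReal NNReal

/-- The law on `Xⁿ` of the Markov chain with initial distribution `p` and transition
matrix `P`: the point `x` has mass `p(x₀) ∏_{i<n-1} P(x_i, x_{i+1})`. -/
noncomputable def markovMeasure {X : Type*} [Fintype X] [DecidableEq X] [MeasurableSpace X]
    (p : X → ℝ) (P : X → X → ℝ) (n : ℕ) : Measure (Fin n → X) :=
  ∑ x : Fin n → X,
    ENNReal.ofReal ((if h : 0 < n then p (x ⟨0, h⟩) else 1) *
      ∏ i : Fin n, ∏ j : Fin n, if (j : ℕ) = (i : ℕ) + 1 then P (x i) (x j) else 1) •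
      Measure.dirac x

/-- The conditional Kullback–Leibler divergence
`D(Q‖P|q) = ∑_{x₁} q(x₁) D(Q(·|x₁) ‖ P(·|x₁))` of a joint distribution `Q` on `X × X`
with marginal `q` relative to a transition matrix `P` (natural logarithm). -/
noncomputable def condKL {X : Type*} [Fintype X] (Q : X → X → ℝ) (P : X → X → ℝ) : ℝ :=
  ∑ x₁ : X, ∑ x₂ : X, Q x₁ x₂ * Real.log (Q x₁ x₂ / ((∑ y : X, Q x₁ y) * P x₁ x₂))


/-! ### Path weights -/

namespace NatMarkov

open Finset

set_option linter.unusedSectionVars false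

variable {X : Type*} [Fintype X]

/-- Weight of a path of length `m+1`. -/
noncomputable def pw (p : X → ℝ) (P : X → X → ℝ) (m : ℕ) (x : Fin (m + 1) → X) : ℝ :=
  p (x 0) * ∏ i : Fin m, P (x i.castSucc) (x i.succ)

lemma pw_nonneg {p : X → ℝ} {P : X → X → ℝ} (hp : ∀ x, 0 ≤ p x) (hP : ∀ x y, 0 ≤ P x y)
    (m : ℕ) (x : Fin (m + 1) → X) : 0 ≤ pw p P m x :=
  mul_nonneg (hp _) (Finset.prod_nonneg fun _ _ => hP _ _)

lemma pw_pos {p : X → ℝ} {P : X → X → ℝ} (hp : ∀ x, 0 < p x) (hP : ∀ x y, 0 < P x y)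
    (m : ℕ) (x : Fin (m + 1) → X) : 0 < pw p P m x :=
  mul_pos (hp _) (Finset.prod_pos fun _ _ => hP _ _)

lemma pw_snoc (p : X → ℝ) (P : X → X → ℝ) (m : ℕ) (x : Fin (m + 1) → X) (y : X) :
    pw p P (m + 1) (Fin.snoc (α := fun _ => X) x y) = pw p P m x * P (x (Fin.last m)) y := by
  unfold pw
  rw [Fin.prod_univ_castSucc, ← mul_assoc]
  have h0 : (Fin.snoc (α := fun _ => X) x y) 0 = x 0 := by
    rw [← Fin.castSucc_zero, Fin.snoc_castSucc]
  have h1 : ∀ i : Fin m, (Fin.snoc (α := fun _ => X) x y) (i.castSucc.succ) = x i.succ := by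
    intro i
    rw [Fin.succ_castSucc, Fin.snoc_castSucc]
  simp only [h0, h1, Fin.snoc_castSucc, Fin.succ_last, Fin.snoc_last]

lemma psum_snoc (f : X → X → ℝ) (m : ℕ) (x : Fin (m + 1) → X) (y : X) :
    ∑ i : Fin (m + 1), f ((Fin.snoc (α := fun _ => X) x y : Fin (m + 1 + 1) → X) i.castSucc)
      ((Fin.snoc (α := fun _ => X) x y : Fin (m + 1 + 1) → X) i.succ)
      = (∑ i : Fin m, f (x i.castSucc) (x i.succ)) + f (x (Fin.last m)) y := by
  rw [Fin.sum_univ_castSucc]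
  have h1 : ∀ i : Fin m, (Fin.snoc (α := fun _ => X) x y) (i.castSucc.succ) = x i.succ := by
    intro i
    rw [Fin.succ_castSucc, Fin.snoc_castSucc]
  simp only [h1, Fin.snoc_castSucc, Fin.succ_last, Fin.snoc_last]

lemma sum_snoc (m : ℕ) (F : (Fin (m + 1) → X) → ℝ) :
    ∑ z, F z = ∑ x : Fin m → X, ∑ y : X, F (Fin.snoc (α := fun _ => X) x y) := by
  classical
  rw [← Fintype.sum_prod_type', ← (Fin.snocEquiv (fun _ : Fin (m + 1) => X)).sum_comp,
    Fintype.sum_prod_type, Fintype.sum_prod_type, Finset.sum_comm]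
  rfl

lemma mass_le {p : X → ℝ} {P : X → X → ℝ} (hp : ∀ x, 0 ≤ p x) (hP : ∀ x y, 0 ≤ P x y)
    (hrow : ∀ x, ∑ y, P x y ≤ 1) (m : ℕ) : ∑ x, pw p P m x ≤ ∑ a, p a := by
  classical
  induction m with
  | zero =>
    rw [← (Equiv.funUnique (Fin 1) X).symm.sum_comp]
    simp [pw]
  | succ m ih =>
    rw [sum_snoc]
    refine le_trans (Finset.sum_le_sum fun x _ => ?_) ih
    simp only [pw_snoc]
    rw [← Finset.mul_sum]
    exact mul_le_of_le_one_right (pw_nonneg hp hP m x) (hrow _)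

lemma mass_eq {p : X → ℝ} {P : X → X → ℝ}
    (hrow : ∀ x, ∑ y, P x y = 1) (m : ℕ) : ∑ x, pw p P m x = ∑ a, p a := by
  classical
  induction m with
  | zero =>
    rw [← (Equiv.funUnique (Fin 1) X).symm.sum_comp]
    simp [pw]
  | succ m ih =>
    rw [sum_snoc, ← ih]
    refine Finset.sum_congr rfl fun x _ => ?_
    simp only [pw_snoc]
    rw [← Finset.mul_sum, hrow, mul_one]

/-! ### Second moment bound -/

lemma second_moment {q : X → ℝ} {W : X → X → ℝ} (hq : ∀ x, 0 ≤ q x) (hq1 : ∑ x, q x = 1)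
    (hW : ∀ x y, 0 ≤ W x y) (hrow : ∀ x, ∑ y, W x y = 1)
    (h : X → X → ℝ) (hh : ∀ x, ∑ y, W x y * h x y = 0) (K : ℝ)
    (hK : ∀ x y, h x y ^ 2 ≤ K) (m : ℕ) :
    ∑ x, pw q W m x * (∑ i : Fin m, h (x i.castSucc) (x i.succ)) ^ 2 ≤ m * K := by
  induction m with
  | zero => simp
  | succ m ih =>
    rw [sum_snoc]
    simp only [pw_snoc, psum_snoc]
    have key : ∀ x : Fin (m + 1) → X,
        ∑ y, pw q W m x * W (x (Fin.last m)) y *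
          ((∑ i : Fin m, h (x i.castSucc) (x i.succ)) + h (x (Fin.last m)) y) ^ 2
        ≤ pw q W m x * (∑ i : Fin m, h (x i.castSucc) (x i.succ)) ^ 2 + pw q W m x * K := by
      intro x
      set S := ∑ i : Fin m, h (x i.castSucc) (x i.succ)
      set a := x (Fin.last m)
      have e : ∑ y, pw q W m x * W a y * (S + h a y) ^ 2
          = pw q W m x * (S ^ 2 * ∑ y, W a y + 2 * S * ∑ y, W a y * h a y
            + ∑ y, W a y * h a y ^ 2) := by
        simp only [Finset.mul_sum, ← Finset.sum_add_distrib]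
        exact Finset.sum_congr rfl fun y _ => by ring
      rw [e, hrow, hh, ← mul_add]
      refine mul_le_mul_of_nonneg_left ?_ (pw_nonneg hq hW m x)
      have : ∑ y, W a y * h a y ^ 2 ≤ ∑ y, W a y * K :=
        Finset.sum_le_sum fun y _ => mul_le_mul_of_nonneg_left (hK _ _) (hW _ _)
      rw [← Finset.sum_mul, hrow] at this
      linarith
    refine le_trans (Finset.sum_le_sum fun x _ => key x) ?_
    rw [Finset.sum_add_distrib, ← Finset.sum_mul, mass_eq hrow, hq1]
    push_cast
    linarith

/-! ### Poisson equation -/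

lemma harmonic_const {W : X → X → ℝ} (hW : ∀ x y, 0 < W x y) (hrow : ∀ x, ∑ y, W x y = 1)
    (g : X → ℝ) (hg : ∀ x, g x = ∑ y, W x y * g y) (x y : X) : g x = g y := by
  have : Nonempty X := ⟨x⟩
  obtain ⟨a, ha⟩ := Finite.exists_max g
  have h0 : ∑ y, W a y * (g a - g y) = 0 := by
    simp only [mul_sub, Finset.sum_sub_distrib]
    rw [← Finset.sum_mul, hrow, ← hg a]
    ring
  have h1 := (Finset.sum_eq_zero_iff_of_nonneg (fun y _ =>
    mul_nonneg (hW a y).le (sub_nonneg.2 (ha y)))).1 h0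
  have h2 : ∀ y, g a = g y := fun y => by
    have := h1 y (Finset.mem_univ _)
    rcases mul_eq_zero.1 this with h | h
    · exact absurd h (hW a y).ne'
    · linarith
  rw [← h2 x, ← h2 y]

lemma poisson {q : X → ℝ} {W : X → X → ℝ} (hq1 : ∑ x, q x = 1)
    (hW : ∀ x y, 0 < W x y) (hrow : ∀ x, ∑ y, W x y = 1)
    (hstat : ∀ y, ∑ x, q x * W x y = q y) (φ : X → ℝ) (hφ : ∑ x, q x * φ x = 0) :
    ∃ g : X → ℝ, ∀ x, φ x = g x - ∑ y, W x y * g y := by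
  let L : (X → ℝ) →ₗ[ℝ] (X → ℝ) :=
    { toFun := fun g x => g x - ∑ y, W x y * g y + ∑ y, q y * g y
      map_add' := by
        intro g g'
        funext x
        simp only [Pi.add_apply, mul_add, Finset.sum_add_distrib]
        ring
      map_smul' := by
        intro c g
        funext x
        simp only [Pi.smul_apply, smul_eq_mul, RingHom.id_apply, mul_add, mul_sub, Finset.mul_sum]
        congr 1
        · congr 1
          exact Finset.sum_congr rfl fun y _ => by ring
        · exact Finset.sum_congr rfl fun y _ => by ring }
  have hL : ∀ g x, L g x = g x - ∑ y, W x y * g y + ∑ y, q y * g y := fun _ _ => rfl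
  have hqL : ∀ g, ∑ x, q x * L g x = ∑ y, q y * g y := by
    intro g
    simp only [hL, mul_add, mul_sub, Finset.sum_add_distrib, Finset.sum_sub_distrib]
    rw [← Finset.sum_mul, hq1]
    have : ∑ x, q x * ∑ y, W x y * g y = ∑ y, q y * g y := by
      simp only [Finset.mul_sum]
      rw [Finset.sum_comm]
      refine Finset.sum_congr rfl fun y _ => ?_
      rw [← hstat y, Finset.sum_mul]
      exact Finset.sum_congr rfl fun x _ => by ring
    rw [this]; ring
  have inj : Function.Injective L := by
    rw [← LinearMap.ker_eq_bot, LinearMap.ker_eq_bot']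
    intro g hg
    have h0 : ∑ y, q y * g y = 0 := by rw [← hqL, hg]; simp
    have h1 : ∀ x, g x = ∑ y, W x y * g y := fun x => by
      have := congrFun hg x
      rw [hL, h0] at this
      simp at this
      linarith
    have hc := harmonic_const hW hrow g h1
    funext x
    have : ∑ y, q y * g y = g x := by
      rw [Finset.sum_congr rfl fun y _ => by rw [hc y x], ← Finset.sum_mul, hq1, one_mul]
    rw [← this, h0]; rfl
  obtain ⟨g, hg⟩ := LinearMap.injective_iff_surjective.1 inj φ
  refine ⟨g, fun x => ?_⟩
  have h0 : ∑ y, q y * g y = 0 := by rw [← hqL, hg, hφ]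
  rw [← hg, hL, h0, add_zero]

lemma lln {q : X → ℝ} {W : X → X → ℝ} (hq : ∀ x, 0 ≤ q x) (hq1 : ∑ x, q x = 1)
    (hW : ∀ x y, 0 < W x y) (hrow : ∀ x, ∑ y, W x y = 1)
    (hstat : ∀ y, ∑ x, q x * W x y = q y)
    (f : X → X → ℝ) (hf : ∑ x, ∑ y, q x * W x y * f x y = 0) :
    ∃ C : ℝ, ∀ m : ℕ,
      ∑ x, pw q W m x * (∑ i : Fin m, f (x i.castSucc) (x i.succ)) ^ 2 ≤ C * (m + 1) := by
  obtain ⟨g, hg⟩ := poisson hq1 hW hrow hstat (fun x => ∑ y, W x y * f x y) (by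
    rw [← hf]
    refine Finset.sum_congr rfl fun x _ => ?_
    rw [Finset.mul_sum]
    exact Finset.sum_congr rfl fun y _ => by ring)
  set h : X → X → ℝ := fun x y => f x y - g x + g y with hdef
  have hh : ∀ x, ∑ y, W x y * h x y = 0 := fun x => by
    simp only [hdef, mul_add, mul_sub, Finset.sum_add_distrib, Finset.sum_sub_distrib]
    rw [← Finset.sum_mul, hrow, hg x]; ring
  obtain ⟨K, hK⟩ : ∃ K : ℝ, ∀ z : X × X, h z.1 z.2 ^ 2 ≤ K := by
    obtain ⟨K, hK⟩ := (Set.finite_range fun z : X × X => h z.1 z.2 ^ 2).bddAbove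
    exact ⟨K, fun z => hK ⟨z, rfl⟩⟩
  obtain ⟨G, hG⟩ : ∃ G : ℝ, ∀ z : X × X, (g z.1 - g z.2) ^ 2 ≤ G := by
    obtain ⟨K, hK⟩ := (Set.finite_range fun z : X × X => (g z.1 - g z.2) ^ 2).bddAbove
    exact ⟨K, fun z => hK ⟨z, rfl⟩⟩
  have hS := second_moment hq hq1 (fun x y => (hW x y).le) hrow h hh K (fun x y => hK (x, y))
  have hmass := fun m => (mass_eq (p := q) hrow m).trans hq1
  refine ⟨2 * |K| + 2 * |G|, fun m => ?_⟩
  have pt : ∀ x : Fin (m + 1) → X,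
      pw q W m x * (∑ i : Fin m, f (x i.castSucc) (x i.succ)) ^ 2 ≤
      2 * (pw q W m x * (∑ i : Fin m, h (x i.castSucc) (x i.succ)) ^ 2) + pw q W m x * (2 * G) := by
    intro x
    have tel : ∑ i : Fin m, f (x i.castSucc) (x i.succ)
        = ∑ i : Fin m, h (x i.castSucc) (x i.succ) + (g (x 0) - g (x (Fin.last m))) := by
      have h1 := Fin.sum_univ_castSucc (fun i : Fin (m + 1) => g (x i))
      have h2 := Fin.sum_univ_succ (fun i : Fin (m + 1) => g (x i))
      simp only [hdef, Finset.sum_add_distrib, Finset.sum_sub_distrib]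
      linarith
    rw [tel]
    set S := ∑ i : Fin m, h (x i.castSucc) (x i.succ)
    have hG' := hG (x 0, x (Fin.last m))
    simp only at hG'
    set d := g (x 0) - g (x (Fin.last m))
    have hw := pw_nonneg hq (fun x y => (hW x y).le) m x
    have : (S + d) ^ 2 ≤ 2 * S ^ 2 + 2 * G := by nlinarith [sq_nonneg (S - d)]
    nlinarith [mul_le_mul_of_nonneg_left this hw]
  refine le_trans (Finset.sum_le_sum fun x _ => pt x) ?_
  rw [Finset.sum_add_distrib, ← Finset.mul_sum, ← Finset.sum_mul, hmass]
  have h1 := hS m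
  have h2 : (m : ℝ) * K ≤ m * |K| := mul_le_mul_of_nonneg_left (le_abs_self K) (Nat.cast_nonneg m)
  have h3 := le_abs_self G
  have h4 : 0 ≤ (m : ℝ) * |G| := by positivity
  have h5 := abs_nonneg K
  nlinarith

/-! ### Cyclic types -/

open Classical in
/-- Cyclic transition counts. -/
noncomputable def cnt (m : ℕ) (x : Fin (m + 1) → X) (a b : X) : ℝ :=
  ∑ i : Fin (m + 1), if x i = a ∧ x (i + 1) = b then 1 else 0

/-- Cyclic empirical type. -/
noncomputable def typ (m : ℕ) (x : Fin (m + 1) → X) (a b : X) : ℝ :=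
  cnt m x a b / (m + 1)

lemma cnt_nonneg (m : ℕ) (x : Fin (m + 1) → X) (a b : X) : 0 ≤ cnt m x a b :=
  Finset.sum_nonneg fun i _ => by split_ifs <;> norm_num

lemma typ_nonneg (m : ℕ) (x : Fin (m + 1) → X) (a b : X) : 0 ≤ typ m x a b :=
  div_nonneg (cnt_nonneg _ _ _ _) (by positivity)

lemma sum_cnt (m : ℕ) (x : Fin (m + 1) → X) (F : X → X → ℝ) :
    ∑ a, ∑ b, cnt m x a b * F a b = ∑ i, F (x i) (x (i + 1)) := by
  classical
  unfold cnt
  simp only [Finset.sum_mul]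
  have : ∀ a, ∑ b, ∑ i : Fin (m + 1), (if x i = a ∧ x (i + 1) = b then (1 : ℝ) else 0) * F a b
      = ∑ i : Fin (m + 1), ∑ b, (if x i = a ∧ x (i + 1) = b then (1 : ℝ) else 0) * F a b :=
    fun a => Finset.sum_comm
  simp only [this]
  rw [Finset.sum_comm]
  refine Finset.sum_congr rfl fun i _ => ?_
  simp [ite_and]

lemma cnt_pos (m : ℕ) (x : Fin (m + 1) → X) (i : Fin (m + 1)) :
    0 < cnt m x (x i) (x (i + 1)) := by
  classical
  unfold cnt
  refine Finset.sum_pos' (fun i _ => by split_ifs <;> norm_num) ⟨i, Finset.mem_univ _, by simp⟩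

lemma typ_pos (m : ℕ) (x : Fin (m + 1) → X) (i : Fin (m + 1)) :
    0 < typ m x (x i) (x (i + 1)) := div_pos (cnt_pos _ _ _) (by positivity)

lemma typ_sum (m : ℕ) (x : Fin (m + 1) → X) : ∑ a, ∑ b, typ m x a b = 1 := by
  have := sum_cnt m x (fun _ _ => 1)
  simp at this
  simp only [typ, ← Finset.sum_div, this]
  field_simp

lemma typ_stat (m : ℕ) (x : Fin (m + 1) → X) (a : X) :
    ∑ b, typ m x b a = ∑ b, typ m x a b := by
  classical
  simp only [typ, ← Finset.sum_div]
  congr 1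
  unfold cnt
  rw [Finset.sum_comm, Finset.sum_comm (s := Finset.univ (α := X))]
  have h1 : ∀ i : Fin (m + 1), ∑ b, (if x i = b ∧ x (i + 1) = a then (1 : ℝ) else 0)
      = if x (i + 1) = a then 1 else 0 := fun i => by simp [ite_and]
  have h2 : ∀ i : Fin (m + 1), ∑ b, (if x i = a ∧ x (i + 1) = b then (1 : ℝ) else 0)
      = if x i = a then 1 else 0 := fun i => by simp [ite_and]
  simp only [h1, h2]
  exact Equiv.sum_comp (Equiv.addRight (1 : Fin (m + 1))) (fun i => if x i = a then (1 : ℝ) else 0)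

/-- Row-normalized matrix. -/
noncomputable def rown (t : X → X → ℝ) (a b : X) : ℝ := t a b / ∑ y, t a y

lemma rown_nonneg {t : X → X → ℝ} (ht : ∀ a b, 0 ≤ t a b) (a b : X) : 0 ≤ rown t a b :=
  div_nonneg (ht _ _) (Finset.sum_nonneg fun _ _ => ht _ _)

lemma rown_row {t : X → X → ℝ} (a : X) : ∑ b, rown t a b ≤ 1 := by
  simp only [rown, ← Finset.sum_div]
  exact div_self_le_one _

lemma rown_le {t : X → X → ℝ} (ht : ∀ a b, 0 ≤ t a b) (a b : X) : rown t a b ≤ 1 :=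
  le_trans (Finset.single_le_sum (f := fun b => rown t a b) (fun y _ => rown_nonneg ht a y)
    (Finset.mem_univ b)) (rown_row a)

lemma rown_typ (m : ℕ) (x : Fin (m + 1) → X) : rown (typ m x) = rown (cnt m x) := by
  funext a b
  simp only [rown, typ, ← Finset.sum_div]
  have : (m : ℝ) + 1 ≠ 0 := by positivity
  rw [div_div_div_cancel_right₀ this]

lemma cyc_prod (m : ℕ) (x : Fin (m + 1) → X) (P : X → X → ℝ) :
    ∏ i, P (x i) (x (i + 1)) = (∏ i : Fin m, P (x i.castSucc) (x i.succ)) *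
      P (x (Fin.last m)) (x 0) := by
  rw [Fin.prod_univ_castSucc]
  simp

lemma condKL_typ (m : ℕ) (x : Fin (m + 1) → X) {P : X → X → ℝ} (hP : ∀ a b, 0 < P a b) :
    Real.exp (((m + 1 : ℕ) : ℝ) * condKL (typ m x) P) * ∏ i, P (x i) (x (i + 1))
      = ∏ i, rown (typ m x) (x i) (x (i + 1)) := by
  have h1 : ((m + 1 : ℕ) : ℝ) * condKL (typ m x) P
      = ∑ i, Real.log (typ m x (x i) (x (i + 1)) /
          ((∑ y, typ m x (x i) y) * P (x i) (x (i + 1)))) := by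
    rw [← sum_cnt m x (fun a b => Real.log (typ m x a b / ((∑ y, typ m x a y) * P a b)))]
    unfold condKL
    simp only [Finset.mul_sum]
    refine Finset.sum_congr rfl fun a _ => Finset.sum_congr rfl fun b _ => ?_
    rw [← mul_assoc]
    congr 1
    rw [typ]
    have : (m : ℝ) + 1 ≠ 0 := by positivity
    push_cast
    field_simp
  rw [h1, Real.exp_sum, ← Finset.prod_mul_distrib]
  refine Finset.prod_congr rfl fun i _ => ?_
  have hq : 0 < ∑ y, typ m x (x i) y :=
    lt_of_lt_of_le (typ_pos m x i) (Finset.single_le_sum (f := fun y => typ m x (x i) y)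
      (fun y _ => typ_nonneg m x _ y) (Finset.mem_univ _))
  have hPi := hP (x i) (x (i + 1))
  rw [Real.exp_log (div_pos (typ_pos m x i) (mul_pos hq hPi)), rown]
  field_simp

lemma type_bound {p : X → ℝ} {P : X → X → ℝ} (hp0 : ∀ x, 0 ≤ p x) (hp1 : ∑ x, p x = 1)
    (hP : ∀ x y, 0 < P x y) :
    ∃ C : ℝ, 0 < C ∧ ∀ (m : ℕ) (S : Finset (Fin (m + 1) → X)) (e : ℝ),
      (∀ x ∈ S, e ≤ condKL (typ m x) P) →
      ∑ x ∈ S, pw p P m x ≤ C * ((m : ℝ) + 2) ^ (Fintype.card X * Fintype.card X) *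
        Real.exp (-(((m + 1 : ℕ) : ℝ) * e)) := by
  classical
  obtain ⟨B, hB⟩ : ∃ B : ℝ, ∀ z : X × X, (P z.1 z.2)⁻¹ ≤ B := by
    obtain ⟨K, hK⟩ := (Set.finite_range fun z : X × X => (P z.1 z.2)⁻¹).bddAbove
    exact ⟨K, fun z => hK ⟨z, rfl⟩⟩
  have hB0 : 0 < |B| + 1 := by positivity
  have hple : ∀ a, p a ≤ 1 := fun a => by
    rw [← hp1]; exact Finset.single_le_sum (fun a _ => hp0 a) (Finset.mem_univ a)
  refine ⟨(|B| + 1) * ((Fintype.card X : ℝ) + 1), by positivity, fun m S e hS => ?_⟩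
  let T (t : X → X → Fin (m + 2)) : X → X → ℝ := fun a b => ((t a b : ℕ) : ℝ)
  have hT : ∀ t a b, 0 ≤ T t a b := fun t a b => Nat.cast_nonneg _
  set E := Real.exp (-(((m + 1 : ℕ) : ℝ) * e)) with hE
  have pt : ∀ x ∈ S, pw p P m x ≤ (|B| + 1) * E *
      ∑ t : X → X → Fin (m + 2), pw (fun _ => 1) (rown (T t)) m x := by
    intro x hx
    set R := ∏ i : Fin m, rown (typ m x) (x i.castSucc) (x i.succ) with hR
    have hR0 : 0 ≤ R := Finset.prod_nonneg fun i _ => rown_nonneg (typ_nonneg m x) _ _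
    have h1 : R ≤ ∑ t : X → X → Fin (m + 2), pw (fun _ => 1) (rown (T t)) m x := by
      have hc : ∀ a b, ∃ k : Fin (m + 2), cnt m x a b = ((k : ℕ) : ℝ) := by
        intro a b
        refine ⟨⟨(Finset.univ.filter fun i : Fin (m + 1) => x i = a ∧ x (i + 1) = b).card, ?_⟩, ?_⟩
        · have := Finset.card_filter_le (Finset.univ : Finset (Fin (m + 1)))
            (fun i => x i = a ∧ x (i + 1) = b)
          simp at this
          omega
        · simp [cnt]
      choose t ht using hc
      have e1 : R = pw (fun _ => 1) (rown (T t)) m x := by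
        have : T t = cnt m x := by
          funext a b
          exact (ht a b).symm
        rw [this, ← rown_typ, pw, one_mul]
      rw [e1]
      exact Finset.single_le_sum (f := fun t => pw (fun _ => 1) (rown (T t)) m x)
        (fun t _ => pw_nonneg (fun _ => zero_le_one) (rown_nonneg (hT t)) m x) (Finset.mem_univ t)
    have h2 : (∏ i, P (x i) (x (i + 1))) ≤ E * R := by
      have hk := condKL_typ m x hP
      have hle : ∏ i, rown (typ m x) (x i) (x (i + 1)) ≤ R := by
        rw [cyc_prod]
        exact mul_le_of_le_one_right hR0 (rown_le (typ_nonneg m x) _ _)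
      have hpp : 0 ≤ ∏ i, P (x i) (x (i + 1)) := Finset.prod_nonneg fun i _ => (hP _ _).le
      have h3 : Real.exp (((m + 1 : ℕ) : ℝ) * e) * ∏ i, P (x i) (x (i + 1)) ≤ R := by
        refine le_trans ?_ (hk.trans_le hle)
        refine mul_le_mul_of_nonneg_right (Real.exp_le_exp.2 ?_) hpp
        exact mul_le_mul_of_nonneg_left (hS x hx) (Nat.cast_nonneg _)
      rw [hE, Real.exp_neg]
      rw [inv_mul_eq_div, le_div_iff₀ (Real.exp_pos _), mul_comm]
      exact h3
    have h4 : pw p P m x ≤ (|B| + 1) * ∏ i, P (x i) (x (i + 1)) := by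
      rw [cyc_prod, pw]
      set Y := ∏ i : Fin m, P (x i.castSucc) (x i.succ)
      have hY : 0 ≤ Y := Finset.prod_nonneg fun i _ => (hP _ _).le
      have hb := hB (x (Fin.last m), x 0)
      simp only at hb
      have hz := hP (x (Fin.last m)) (x 0)
      set z := P (x (Fin.last m)) (x 0)
      have : 1 ≤ (|B| + 1) * z := by
        have : z⁻¹ ≤ |B| + 1 := by linarith [le_abs_self B]
        rwa [inv_le_iff_one_le_mul₀ hz] at this
      calc p (x 0) * Y ≤ 1 * Y := mul_le_mul_of_nonneg_right (hple _) hY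
        _ ≤ ((|B| + 1) * z) * Y := mul_le_mul_of_nonneg_right this hY
        _ = _ := by ring
    have hE0 : 0 < E := Real.exp_pos _
    calc pw p P m x ≤ (|B| + 1) * (E * R) :=
          h4.trans (mul_le_mul_of_nonneg_left h2 hB0.le)
      _ ≤ (|B| + 1) * (E * ∑ t : X → X → Fin (m + 2), pw (fun _ => 1) (rown (T t)) m x) := by
          gcongr
      _ = _ := by ring
  have hE0 : 0 < E := Real.exp_pos _
  calc ∑ x ∈ S, pw p P m x ≤ ∑ x ∈ S, (|B| + 1) * E *
        ∑ t : X → X → Fin (m + 2), pw (fun _ => 1) (rown (T t)) m x := Finset.sum_le_sum pt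
    _ ≤ ∑ x, (|B| + 1) * E *
        ∑ t : X → X → Fin (m + 2), pw (fun _ => 1) (rown (T t)) m x := by
        refine Finset.sum_le_sum_of_subset_of_nonneg (Finset.subset_univ _) fun x _ _ => ?_
        refine mul_nonneg (by positivity) (Finset.sum_nonneg fun t _ => ?_)
        exact pw_nonneg (fun _ => zero_le_one) (rown_nonneg (hT t)) m x
    _ = (|B| + 1) * E * ∑ t : X → X → Fin (m + 2), ∑ x, pw (fun _ => 1) (rown (T t)) m x := by
        rw [← Finset.mul_sum, Finset.sum_comm]
    _ ≤ (|B| + 1) * E * ∑ t : X → X → Fin (m + 2), ((Fintype.card X : ℝ) + 1) := by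
        refine mul_le_mul_of_nonneg_left (Finset.sum_le_sum fun t _ => ?_) (by positivity)
        refine (mass_le (fun _ => zero_le_one) (rown_nonneg (hT t)) rown_row m).trans ?_
        simp
    _ = _ := by
        simp [pow_mul]
        ring

/-! ### Rates -/

lemma le_expRate_iff {n : ℕ} (hn : 0 < n) {v : ℝ} (hv : 0 ≤ v) (e : ℝ) :
    (e : EReal) ≤ expRate n (ENNReal.ofReal v) ↔ v ≤ Real.exp (-(n * e)) := by
  have hn' : (0 : ℝ) < n := Nat.cast_pos.2 hn
  unfold expRate
  rcases hv.eq_or_lt with rfl | hv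
  · simp only [ENNReal.ofReal_zero, ENNReal.log_zero, EReal.neg_bot]
    rw [EReal.coe_mul_top_of_pos (inv_pos.2 hn')]
    simp [Real.exp_nonneg]
  · rw [ENNReal.log_ofReal_of_pos hv, ← EReal.coe_neg, ← EReal.coe_mul, EReal.coe_le_coe_iff,
      ← Real.log_le_iff_le_exp hv, inv_mul_eq_div, le_div_iff₀ hn']
    constructor <;> intro h <;> linarith

lemma rate_ge {v : ℕ → ℝ} (hv : ∀ m, 0 ≤ v m) {C : ℝ} {k : ℕ} {e : ℝ}
    (h : ∀ m, v m ≤ C * ((m : ℝ) + 2) ^ k * Real.exp (-(((m + 1 : ℕ) : ℝ) * e)))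
    {μ : ℕ → ℝ≥0∞} (hμ : ∀ m, μ (m + 1) = ENNReal.ofReal (v m)) :
    (e : EReal) ≤ Filter.atTop.liminf (fun n => expRate n (μ n)) := by
  refine EReal.ge_of_forall_gt_iff_ge.1 fun e' he' => ?_
  have hlt : 0 < e - e' := sub_pos.2 (EReal.coe_lt_coe_iff.1 he')
  have h0 : Tendsto (fun x : ℝ => x ^ k / Real.exp ((e - e') * x)) atTop (nhds 0) :=
    (isLittleO_pow_exp_pos_mul_atTop k hlt).tendsto_div_nhds_zero
  have h1 : Tendsto (fun m : ℕ => (m : ℝ) + 2) atTop atTop :=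
    tendsto_atTop_add_const_right _ _ tendsto_natCast_atTop_atTop
  have h2 := (h0.comp h1).const_mul (C * Real.exp (e - e'))
  rw [mul_zero] at h2
  have h3 := h2.eventually (gt_mem_nhds (zero_lt_one' ℝ))
  refine Filter.le_liminf_of_le (by isBoundedDefault) ?_
  rw [← Filter.map_add_atTop_eq_nat 1, Filter.eventually_map]
  filter_upwards [h3] with m hm
  rw [hμ, le_expRate_iff (Nat.succ_pos m) (hv m)]
  refine (h m).trans ?_
  have h5 : C * ((m : ℝ) + 2) ^ k * Real.exp (-(((m + 1 : ℕ) : ℝ) * e))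
      = (C * Real.exp (e - e') * (((m : ℝ) + 2) ^ k / Real.exp ((e - e') * ((m : ℝ) + 2))))
        * Real.exp (-(((m + 1 : ℕ) : ℝ) * e')) := by
    have h6 : Real.exp (-(((m + 1 : ℕ) : ℝ) * e)) = Real.exp (e - e') *
        Real.exp (-((e - e') * ((m : ℝ) + 2))) * Real.exp (-(((m + 1 : ℕ) : ℝ) * e')) := by
      rw [← Real.exp_add, ← Real.exp_add]
      congr 1
      push_cast
      ring
    rw [h6, Real.exp_neg ((e - e') * ((m : ℝ) + 2))]
    ring
  rw [h5]
  exact mul_le_of_le_one_left (Real.exp_nonneg _) hm.le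

lemma rate_le {v : ℕ → ℝ} (hv : ∀ m, 0 ≤ v m) {e e' : ℝ} (hee : e' < e)
    {μ : ℕ → ℝ≥0∞} (hμ : ∀ m, μ (m + 1) = ENNReal.ofReal (v m))
    (h : (e : EReal) ≤ Filter.atTop.liminf (fun n => expRate n (μ n))) :
    ∀ᶠ m : ℕ in atTop, v m ≤ Real.exp (-(((m + 1 : ℕ) : ℝ) * e')) := by
  have h1 := Filter.eventually_lt_of_lt_liminf ((EReal.coe_lt_coe_iff.2 hee).trans_le h)
  have h2 := (tendsto_add_atTop_nat 1).eventually h1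
  filter_upwards [h2] with m hm
  rw [hμ] at hm
  exact (le_expRate_iff (Nat.succ_pos m) (hv m) e').1 hm.le

lemma markov_apply [DecidableEq X] [MeasurableSpace X] [MeasurableSingletonClass X]
    (p : X → ℝ) (P : X → X → ℝ) (hp : ∀ x, 0 ≤ p x) (hP : ∀ x y, 0 ≤ P x y)
    (m : ℕ) (S : Finset (Fin (m + 1) → X)) :
    markovMeasure p P (m + 1) (S : Set (Fin (m + 1) → X))
      = ENNReal.ofReal (∑ x ∈ S, pw p P m x) := by
  have hw : ∀ x : Fin (m + 1) → X, ((if h : 0 < m + 1 then p (x ⟨0, h⟩) else 1) *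
      ∏ i : Fin (m + 1), ∏ j : Fin (m + 1),
        if (j : ℕ) = (i : ℕ) + 1 then P (x i) (x j) else 1) = pw p P m x := by
    intro x
    rw [dif_pos (Nat.succ_pos m), pw, Fin.prod_univ_castSucc]
    have h1 : ∀ i : Fin m, (∏ j : Fin (m + 1),
        if (j : ℕ) = (i.castSucc : ℕ) + 1 then P (x i.castSucc) (x j) else 1)
        = P (x i.castSucc) (x i.succ) := by
      intro i
      have : ∀ j : Fin (m + 1), ((j : ℕ) = (i.castSucc : ℕ) + 1) ↔ j = i.succ := fun j => by
        rw [Fin.ext_iff]; simp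
      simp only [this]
      simp
    have h2 : (∏ j : Fin (m + 1),
        if (j : ℕ) = (Fin.last m : ℕ) + 1 then P (x (Fin.last m)) (x j) else 1) = 1 := by
      refine Finset.prod_eq_one fun j _ => if_neg ?_
      have := j.2
      simp
      omega
    rw [h2, mul_one]
    congr 1
    exact Finset.prod_congr rfl fun i _ => h1 i
  unfold markovMeasure
  simp only [hw]
  rw [Measure.finsetSum_apply, ENNReal.ofReal_sum_of_nonneg (fun x _ => pw_nonneg hp hP m x),
    ← Finset.sum_subset (Finset.subset_univ S)]
  · refine Finset.sum_congr rfl fun x hx => ?_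
    simp [hx]
  · intro x _ hx
    simp [Measure.dirac_apply, hx]

/-! ### Converse -/

lemma condKL_pos_eq {Q P : X → X → ℝ} (hQ : ∀ a b, 0 < Q a b) :
    condKL Q P = ∑ x, ∑ y, (∑ z, Q x z) * rown Q x y * Real.log (rown Q x y / P x y) := by
  unfold condKL
  refine Finset.sum_congr rfl fun x _ => Finset.sum_congr rfl fun y _ => ?_
  have hq : 0 < ∑ z, Q x z :=
    lt_of_lt_of_le (hQ x y) (Finset.single_le_sum (fun y _ => (hQ x y).le) (Finset.mem_univ y))
  rw [rown, div_div, mul_div_cancel₀ _ hq.ne']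

lemma typical {q : X → ℝ} {W : X → X → ℝ} (hq : ∀ x, 0 < q x) (hq1 : ∑ x, q x = 1)
    (hW : ∀ x y, 0 < W x y) (hrow : ∀ x, ∑ y, W x y = 1)
    (hstat : ∀ y, ∑ x, q x * W x y = q y)
    {p : X → ℝ} {P : X → X → ℝ} (hp : ∀ x, 0 < p x) (hP : ∀ x y, 0 < P x y)
    {D δ : ℝ} (hδ : 0 < δ) (hD : D = ∑ x, ∑ y, q x * W x y * Real.log (W x y / P x y)) :
    ∀ᶠ m : ℕ in atTop, ∀ S : Finset (Fin (m + 1) → X),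
      ∑ x ∈ S, pw q W m x ≤ 1 / 8 +
        Real.exp (((m + 1 : ℕ) : ℝ) * (D + δ)) * ∑ x ∈ S, pw p P m x := by
  classical
  set f : X → X → ℝ := fun x y => Real.log (W x y / P x y) - D with hf
  have hqW : ∑ x, ∑ y, q x * W x y = 1 := by
    simp only [← Finset.mul_sum, hrow, mul_one, hq1]
  have hf0 : ∑ x, ∑ y, q x * W x y * f x y = 0 := by
    simp only [hf, mul_sub, Finset.sum_sub_distrib]
    rw [← hD]
    simp only [← Finset.sum_mul]
    rw [hqW]; ring
  obtain ⟨C, hC⟩ := lln (fun x => (hq x).le) hq1 hW hrow hstat f hf0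
  obtain ⟨K, hK⟩ : ∃ K : ℝ, ∀ a : X, Real.log (q a / p a) ≤ K := by
    obtain ⟨K, hK⟩ := (Set.finite_range fun a : X => Real.log (q a / p a)).bddAbove
    exact ⟨K, fun z => hK ⟨z, rfl⟩⟩
  have hlim : Tendsto (fun m : ℕ => (m : ℝ) + 1) atTop atTop :=
    tendsto_atTop_add_const_right _ _ tendsto_natCast_atTop_atTop
  have e1 := hlim.eventually_ge_atTop (2 * (|K| + |D|) / δ)
  have e2 := hlim.eventually_ge_atTop (32 * |C| / δ ^ 2)
  filter_upwards [e1, e2] with m h1 h2 S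
  have hn : (0 : ℝ) < (m : ℝ) + 1 := by positivity
  rw [div_le_iff₀ hδ] at h1
  rw [div_le_iff₀ (by positivity)] at h2
  set n : ℝ := (m : ℝ) + 1 with hn_def
  have hcast : ((m + 1 : ℕ) : ℝ) = n := by push_cast; rfl
  rw [hcast]
  set F : (Fin (m + 1) → X) → ℝ := fun x => ∑ i : Fin m, f (x i.castSucc) (x i.succ) with hF
  -- pointwise bound
  have pt : ∀ x : Fin (m + 1) → X, pw q W m x ≤
      pw q W m x * F x ^ 2 * (4 / (δ ^ 2 * n ^ 2)) + Real.exp (n * (D + δ)) * pw p P m x := by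
    intro x
    have hw := pw_pos hq hW m x
    have hv := pw_pos hp hP m x
    by_cases hx : δ * n / 2 ≤ F x
    · have h3 : 1 ≤ F x ^ 2 * (4 / (δ ^ 2 * n ^ 2)) := by
        rw [← mul_div_assoc, le_div_iff₀ (by positivity)]
        nlinarith [mul_pos hδ hn]
      have h4 : 0 ≤ Real.exp (n * (D + δ)) * pw p P m x := by positivity
      nlinarith
    · push Not at hx
      have h5 : pw q W m x = Real.exp (Real.log (q (x 0) / p (x 0)) + (F x + m * D))
          * pw p P m x := by
        have : F x + m * D = ∑ i : Fin m,
            Real.log (W (x i.castSucc) (x i.succ) / P (x i.castSucc) (x i.succ)) := by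
          simp [hF, hf, Finset.sum_sub_distrib]
        rw [this, Real.exp_add, Real.exp_log (div_pos (hq _) (hp _)), Real.exp_sum]
        unfold pw
        have : ∏ i : Fin m, Real.exp (Real.log (W (x i.castSucc) (x i.succ) /
            P (x i.castSucc) (x i.succ)))
            = (∏ i : Fin m, W (x i.castSucc) (x i.succ)) /
              ∏ i : Fin m, P (x i.castSucc) (x i.succ) := by
          rw [← Finset.prod_div_distrib]
          exact Finset.prod_congr rfl fun i _ => Real.exp_log (div_pos (hW _ _) (hP _ _))
        rw [this]
        have hpp : (∏ i : Fin m, P (x i.castSucc) (x i.succ)) ≠ 0 :=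
          (Finset.prod_pos fun i _ => hP _ _).ne'
        have := (hp (x 0)).ne'
        field_simp
      have h6 : pw q W m x ≤ Real.exp (n * (D + δ)) * pw p P m x := by
        rw [h5]
        refine mul_le_mul_of_nonneg_right (Real.exp_le_exp.2 ?_) hv.le
        have := hK (x 0)
        have hm : (m : ℝ) = n - 1 := by rw [hn_def]; ring
        rw [hm]
        have := le_abs_self K
        have := neg_abs_le D
        nlinarith
      have : 0 ≤ pw q W m x * F x ^ 2 * (4 / (δ ^ 2 * n ^ 2)) := by positivity
      linarith
  refine (Finset.sum_le_sum fun x _ => pt x).trans ?_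
  rw [Finset.sum_add_distrib, ← Finset.mul_sum, ← Finset.sum_mul]
  refine add_le_add_left ?_ _
  have h7 : ∑ x ∈ S, pw q W m x * F x ^ 2 ≤ C * n :=
    (Finset.sum_le_sum_of_subset_of_nonneg (Finset.subset_univ _) fun x _ _ =>
      mul_nonneg (pw_pos hq hW m x).le (sq_nonneg _)).trans (hC m)
  calc (∑ x ∈ S, pw q W m x * F x ^ 2) * (4 / (δ ^ 2 * n ^ 2))
      ≤ (|C| * n) * (4 / (δ ^ 2 * n ^ 2)) := by
        refine mul_le_mul_of_nonneg_right (h7.trans ?_) (by positivity)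
        exact mul_le_mul_of_nonneg_right (le_abs_self C) hn.le
    _ ≤ 1 / 8 := by
        rw [← mul_div_assoc, div_le_iff₀ (by positivity)]
        nlinarith

lemma exp_small {c : ℝ} (hc : c < 0) :
    ∀ᶠ m : ℕ in atTop, Real.exp (((m + 1 : ℕ) : ℝ) * c) ≤ 1 / 8 := by
  have h1 : Tendsto (fun m : ℕ => ((m + 1 : ℕ) : ℝ) * c) atTop atBot :=
    ((tendsto_natCast_atTop_atTop (R := ℝ)).comp (tendsto_add_atTop_nat 1)).atTop_mul_const_of_neg hc
  exact (Real.tendsto_exp_atBot.comp h1).eventually (ge_mem_nhds (by norm_num))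

lemma converse [DecidableEq X] {p pb : X → ℝ} {P Pb : X → X → ℝ} (hp : ∀ x, 0 < p x) (hP : ∀ x y, 0 < P x y)
    (hpb : ∀ x, 0 < pb x) (hPb : ∀ x y, 0 < Pb x y)
    {Q : X → X → ℝ} (hQ : ∀ a b, 0 < Q a b) (hQ1 : ∑ a, ∑ b, Q a b = 1)
    (hQs : ∀ a, ∑ b, Q b a = ∑ b, Q a b)
    {r E : ℝ} (hr : condKL Q P < r) (hE : condKL Q Pb < E)
    (A : ∀ m : ℕ, Finset (Fin (m + 1) → X))
    (h1 : ∀ᶠ m : ℕ in atTop, ∑ x ∈ (A m)ᶜ, pw p P m x ≤ Real.exp (-(((m + 1 : ℕ) : ℝ) * r)))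
    (h2 : ∀ᶠ m : ℕ in atTop, ∑ x ∈ A m, pw pb Pb m x ≤ Real.exp (-(((m + 1 : ℕ) : ℝ) * E))) :
    False := by
  set q : X → ℝ := fun x => ∑ z, Q x z with hq_def
  have hq : ∀ x, 0 < q x := fun x =>
    lt_of_lt_of_le (hQ x x) (Finset.single_le_sum (fun y _ => (hQ x y).le) (Finset.mem_univ x))
  have hqW : ∀ x y, q x * rown Q x y = Q x y := fun x y => by
    rw [rown]; exact mul_div_cancel₀ _ (hq x).ne'
  have hW : ∀ x y, 0 < rown Q x y := fun x y => div_pos (hQ x y) (hq x)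
  have hrow : ∀ x, ∑ y, rown Q x y = 1 := fun x => by
    simp only [rown, ← Finset.sum_div]
    exact div_self (hq x).ne'
  have hstat : ∀ y, ∑ x, q x * rown Q x y = q y := fun y => by
    simp only [hqW]; exact hQs y
  have t1 := typical hq hQ1 hW hrow hstat hp hP (δ := (r - condKL Q P) / 2) (by linarith)
    (condKL_pos_eq (P := P) hQ)
  have t2 := typical hq hQ1 hW hrow hstat hpb hPb (δ := (E - condKL Q Pb) / 2) (by linarith)
    (condKL_pos_eq (P := Pb) hQ)
  have s1 := exp_small (c := condKL Q P + (r - condKL Q P) / 2 - r) (by linarith)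
  have s2 := exp_small (c := condKL Q Pb + (E - condKL Q Pb) / 2 - E) (by linarith)
  obtain ⟨m, h1, h2, t1, t2, s1, s2⟩ :=
    (h1.and (h2.and (t1.and (t2.and (s1.and s2))))).exists
  have t1 := t1 (A m)ᶜ
  have t2 := t2 (A m)
  have tot := Finset.sum_add_sum_compl (A m) (fun x => pw q (rown Q) m x)
  rw [mass_eq hrow, hQ1] at tot
  have u1 := mul_le_mul_of_nonneg_left h1
    (Real.exp_nonneg (((m + 1 : ℕ) : ℝ) * (condKL Q P + (r - condKL Q P) / 2)))
  have u2 := mul_le_mul_of_nonneg_left h2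
    (Real.exp_nonneg (((m + 1 : ℕ) : ℝ) * (condKL Q Pb + (E - condKL Q Pb) / 2)))
  rw [← Real.exp_add, ← sub_eq_add_neg, ← mul_sub] at u1 u2
  linarith

lemma condKL_continuous_eq {Q P : X → X → ℝ} (hQ : ∀ a b, 0 ≤ Q a b) (hP : ∀ a b, 0 < P a b) :
    condKL Q P = ∑ x, (∑ y, (Q x y * Real.log (Q x y) - Q x y * Real.log (P x y))
      - (∑ y, Q x y) * Real.log (∑ y, Q x y)) := by
  unfold condKL
  refine Finset.sum_congr rfl fun x _ => ?_
  rw [Finset.sum_mul, ← Finset.sum_sub_distrib]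
  refine Finset.sum_congr rfl fun y _ => ?_
  rcases (hQ x y).eq_or_lt with h | h
  · rw [← h]; simp
  · have hq : 0 < ∑ y, Q x y :=
      lt_of_lt_of_le h (Finset.single_le_sum (fun y _ => hQ x y) (Finset.mem_univ y))
    rw [Real.log_div h.ne' (mul_pos hq (hP x y)).ne', Real.log_mul hq.ne' (hP x y).ne']
    ring

lemma perturb {P Pb Q Q0 : X → X → ℝ} (hP : ∀ x y, 0 < P x y)
    (hPb : ∀ x y, 0 < Pb x y) (hQ : ∀ a b, 0 ≤ Q a b) (hQ1 : ∑ a, ∑ b, Q a b = 1)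
    (hQs : ∀ a, ∑ b, Q b a = ∑ b, Q a b)
    (hQ0 : ∀ a b, 0 < Q0 a b) (hQ01 : ∑ a, ∑ b, Q0 a b = 1)
    (hQ0s : ∀ a, ∑ b, Q0 b a = ∑ b, Q0 a b)
    {r E : ℝ} (hr : condKL Q P < r) (hE : condKL Q Pb < E) :
    ∃ Q' : X → X → ℝ, (∀ a b, 0 < Q' a b) ∧ (∑ a, ∑ b, Q' a b = 1) ∧
      (∀ a, ∑ b, Q' b a = ∑ b, Q' a b) ∧ condKL Q' P < r ∧ condKL Q' Pb < E := by
  set Z : ℝ → X → X → ℝ := fun t a b => (1 - t) * Q a b + t * Q0 a b with hZ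
  have hZ0 : Z 0 = Q := by funext a b; simp [hZ]
  have hcont : ∀ {R : X → X → ℝ} (hR : ∀ x y, 0 < R x y) {s : ℝ}, condKL Q R < s →
      ∀ᶠ t in nhdsWithin 0 (Set.Ioo (0 : ℝ) 1), condKL (Z t) R < s := by
    intro R hR s hs
    set G : ℝ → ℝ := fun t => ∑ x, (∑ y, (Z t x y * Real.log (Z t x y)
      - Z t x y * Real.log (R x y)) - (∑ y, Z t x y) * Real.log (∑ y, Z t x y)) with hG
    have hGc : Continuous G := by
      have hc : ∀ x y, Continuous fun t => Z t x y := fun x y => by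
        simp only [hZ]; fun_prop
      refine continuous_finsetSum _ fun x _ => Continuous.sub ?_ ?_
      · refine continuous_finsetSum _ fun y _ => Continuous.sub ?_ ?_
        · exact Real.continuous_mul_log.comp (hc x y)
        · exact (hc x y).mul continuous_const
      · exact Real.continuous_mul_log.comp (continuous_finsetSum _ fun y _ => hc x y)
    have hG0 : G 0 < s := by
      simp only [hG, hZ0]
      rwa [← condKL_continuous_eq hQ hR]
    have := (hGc.tendsto 0).eventually (gt_mem_nhds hG0)
    filter_upwards [nhdsWithin_le_nhds this, self_mem_nhdsWithin] with t ht htm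
    rw [condKL_continuous_eq (fun a b => ?_) hR]
    · exact ht
    · have := hQ a b
      have := (hQ0 a b).le
      have h1 : 0 ≤ 1 - t := by linarith [htm.2]
      have h2 := htm.1.le
      positivity
  have hne : (nhdsWithin 0 (Set.Ioo (0 : ℝ) 1)).NeBot := by
    rw [nhdsWithin_Ioo_eq_nhdsGT one_pos]; infer_instance
  obtain ⟨t, h1, h2, ht⟩ := ((hcont hP hr).and ((hcont hPb hE).and
    (self_mem_nhdsWithin (a := (0 : ℝ)) (s := Set.Ioo (0 : ℝ) 1)))).exists
  refine ⟨Z t, fun a b => ?_, ?_, fun a => ?_, h1, h2⟩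
  · have := hQ a b
    have := mul_pos ht.1 (hQ0 a b)
    have h1 : 0 ≤ 1 - t := by linarith [ht.2]
    simp only [hZ]
    positivity
  · simp only [hZ, Finset.sum_add_distrib, ← Finset.mul_sum, hQ1, hQ01]
    ring
  · simp only [hZ, Finset.sum_add_distrib, ← Finset.mul_sum, hQs, hQ0s]

end NatMarkov

/-- Natarajan's theorem (eq. (3.7)): for stationary irreducible Markov sources with
everywhere-positive transition matrices `P, P̄` and (unique) stationary distributions
`p, p̄`, `B_e(r) = inf { D(Q‖P̄|q) : Q ∈ 𝒫₀, D(Q‖P|q) < r }`. -/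
theorem natarajan_markov_error_exponent {X : Type*} [Fintype X] [DecidableEq X]
    [MeasurableSpace X] [MeasurableSingletonClass X]
    (P Pb : X → X → ℝ) (p pb : X → ℝ)
    (hPpos : ∀ x y, 0 < P x y) (hPbpos : ∀ x y, 0 < Pb x y)
    (hProw : ∀ x, ∑ y : X, P x y = 1) (hPbrow : ∀ x, ∑ y : X, Pb x y = 1)
    (hp0 : ∀ x, 0 ≤ p x) (hp1 : ∑ x : X, p x = 1)
    (hpstat : ∀ y, ∑ x : X, p x * P x y = p y)
    (hpuniq : ∀ q : X → ℝ, (∀ x, 0 ≤ q x) → (∑ x : X, q x = 1) →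
      (∀ y, ∑ x : X, q x * P x y = q y) → q = p)
    (hpb0 : ∀ x, 0 ≤ pb x) (hpb1 : ∑ x : X, pb x = 1)
    (hpbstat : ∀ y, ∑ x : X, pb x * Pb x y = pb y)
    (hpbuniq : ∀ q : X → ℝ, (∀ x, 0 ≤ q x) → (∑ x : X, q x = 1) →
      (∀ y, ∑ x : X, q x * Pb x y = q y) → q = pb)
    (r : ℝ) (hr : 0 < r) :
    Be (markovMeasure p P) (markovMeasure pb Pb) r
      = sInf {x : EReal | ∃ Q : X → X → ℝ, (∀ a b, 0 ≤ Q a b) ∧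
          (∑ a : X, ∑ b : X, Q a b = 1) ∧
          (∀ a, ∑ b : X, Q b a = ∑ b : X, Q a b) ∧
          condKL Q P < r ∧ x = ((condKL Q Pb : ℝ) : EReal)} := by
  classical
  obtain ⟨a0⟩ : Nonempty X := by
    by_contra h
    rw [not_nonempty_iff] at h
    simp at hp1
  have hpos : ∀ {p : X → ℝ} {P : X → X → ℝ}, (∀ x y, 0 < P x y) → (∀ x, 0 ≤ p x) →
      (∑ x : X, p x = 1) → (∀ y, ∑ x : X, p x * P x y = p y) → ∀ y, 0 < p y := by
    intro p P hP hp hp1 hst y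
    obtain ⟨x, -, hx⟩ := Finset.exists_ne_zero_of_sum_ne_zero (hp1.trans_ne one_ne_zero)
    rw [← hst y]
    exact Finset.sum_pos' (fun x _ => mul_nonneg (hp x) (hP x y).le)
      ⟨x, Finset.mem_univ _, mul_pos (lt_of_le_of_ne (hp x) hx.symm) (hP x y)⟩
  have hpp := hpos hPpos hp0 hp1 hpstat
  have hpbp := hpos hPbpos hpb0 hpb1 hpbstat
  apply le_antisymm
  · refine sSup_le ?_
    rintro _ ⟨E, ⟨A, -, hA1, hA2⟩, rfl⟩
    refine le_sInf ?_
    rintro _ ⟨Q, hQ, hQ1, hQs, hQr, rfl⟩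
    rw [EReal.coe_le_coe_iff]
    by_contra hlt
    push Not at hlt
    obtain ⟨Q', hQ', hQ1', hQs', hr', hE'⟩ := NatMarkov.perturb hPpos hPbpos hQ hQ1 hQs
      (Q0 := fun a b => p a * P a b) (fun a b => mul_pos (hpp a) (hPpos a b))
      (by simp only [← Finset.mul_sum, hProw, mul_one, hp1])
      (fun a => by rw [hpstat, ← Finset.mul_sum, hProw, mul_one]) hQr hlt
    obtain ⟨r', hr1, hr2⟩ := exists_between hr'
    obtain ⟨E', hE1, hE2⟩ := exists_between hE'
    let S : ∀ m : ℕ, Finset (Fin (m + 1) → X) := fun m => Finset.univ.filter (· ∈ A (m + 1))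
    have hS : ∀ m, (S m : Set (Fin (m + 1) → X)) = A (m + 1) := fun m => by simp [S]
    refine NatMarkov.converse hpp hPpos hpbp hPbpos hQ' hQ1' hQs' hr1 hE1 S ?_ ?_
    · refine NatMarkov.rate_le (fun m => Finset.sum_nonneg fun x _ =>
        NatMarkov.pw_nonneg hp0 (fun x y => (hPpos x y).le) m x) hr2 (fun m => ?_) hA1
      rw [← NatMarkov.markov_apply p P hp0 (fun x y => (hPpos x y).le), Finset.coe_compl, hS]
    · refine NatMarkov.rate_le (fun m => Finset.sum_nonneg fun x _ =>
        NatMarkov.pw_nonneg hpb0 (fun x y => (hPbpos x y).le) m x) hE2 (fun m => ?_) hA2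
      rw [← NatMarkov.markov_apply pb Pb hpb0 (fun x y => (hPbpos x y).le), hS]
  · refine EReal.ge_of_forall_gt_iff_ge.1 fun e he => ?_
    refine le_sSup ⟨e, ?_, rfl⟩
    let S : ∀ m : ℕ, Finset (Fin (m + 1) → X) :=
      fun m => Finset.univ.filter fun x => condKL (NatMarkov.typ m x) P < r
    let A : ∀ n : ℕ, Set (Fin n → X) := fun n =>
      match n with
      | 0 => Set.univ
      | m + 1 => (S m : Set (Fin (m + 1) → X))
    refine ⟨A, fun n => (Set.toFinite _).measurableSet, ?_, ?_⟩
    · obtain ⟨C, -, hC⟩ := NatMarkov.type_bound hp0 hp1 hPpos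
      refine NatMarkov.rate_ge (v := fun m => ∑ x ∈ (S m)ᶜ, NatMarkov.pw p P m x)
        (fun m => Finset.sum_nonneg fun x _ =>
          NatMarkov.pw_nonneg hp0 (fun x y => (hPpos x y).le) m x)
        (fun m => hC m (S m)ᶜ r fun x hx => ?_) (fun m => ?_)
      · simpa [S] using hx
      · rw [← NatMarkov.markov_apply p P hp0 (fun x y => (hPpos x y).le), Finset.coe_compl]
    · obtain ⟨C, -, hC⟩ := NatMarkov.type_bound hpb0 hpb1 hPbpos
      refine NatMarkov.rate_ge (v := fun m => ∑ x ∈ S m, NatMarkov.pw pb Pb m x)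
        (fun m => Finset.sum_nonneg fun x _ =>
          NatMarkov.pw_nonneg hpb0 (fun x y => (hPbpos x y).le) m x)
        (fun m => hC m (S m) e fun x hx => ?_) (fun m => ?_)
      · have hx' : condKL (NatMarkov.typ m x) P < r := by simpa [S] using hx
        rw [← EReal.coe_le_coe_iff]
        refine he.le.trans (sInf_le ⟨NatMarkov.typ m x, NatMarkov.typ_nonneg m x,
          NatMarkov.typ_sum m x, NatMarkov.typ_stat m x, hx', rfl⟩)
      · rw [← NatMarkov.markov_apply pb Pb hpb0 (fun x y => (hPbpos x y).le)]
end
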